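/- arXiv:2505.03731 — 2 statements merged into one kernel-verified Lean document; each statement's English description precedes it below -/
import Mathlib

section
/- Let V and W be finite-dimensional complex vector spaces, let A, φ : V → W be linear maps, and set r = rank A. Suppose there exists ε > 0 such that rank(A + t·φ) = r for all real t with 0 < t < ε. Then φ maps the kernel of A into the range of A, i.e. for every v ∈ ker A one has φ(v) ∈ range A. -/
/-- If `rank (A + t • φ) = rank A` for all sufficiently small `t > 0`,
then `φ` maps the kernel of `A` into the range of `A`. -/
theorem map_ker_le_range_of_rank_eventually_eq
    (V W : Type*) [AddCommGroup V] [Module ℂ V] [FiniteDimensional ℂ V]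
    [AddCommGroup W] [Module ℂ W] [FiniteDimensional ℂ W]
    (A φ : V →ₗ[ℂ] W) (r : ℕ) (hr : Module.finrank ℂ (LinearMap.range A) = r)
    (h : ∃ ε : ℝ, 0 < ε ∧ ∀ t : ℝ, 0 < t → t < ε →
      Module.finrank ℂ (LinearMap.range (A + (t : ℂ) • φ)) = r) :
    ∀ v ∈ LinearMap.ker A, φ v ∈ LinearMap.range A := by
  intro v hv
  by_contra hφ
  obtain ⟨ε, hε, h⟩ := h
  let b := Module.finBasisOfFinrankEq ℂ (LinearMap.range A) hr
  choose u hu using fun i => (b i).2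
  let e := (Module.finBasis ℂ W).equivFun
  let f : ℝ → Fin (r + 1) → W := fun t =>
    Fin.cons (φ v) (fun i => A (u i) + (t : ℂ) • φ (u i))
  have h0 : LinearIndependent ℂ (f 0) := by
    have hb : LinearIndependent ℂ (fun i => A (u i)) := by
      have := b.linearIndependent.map' (LinearMap.range A).subtype (Submodule.ker_subtype _)
      have he : (fun i => A (u i)) = (LinearMap.range A).subtype ∘ b := funext hu
      rw [he]
      exact this
    have : f 0 = Fin.cons (φ v) (fun i => A (u i)) := by
      simp [f]
    rw [this, linearIndependent_finCons]
    refine ⟨hb, fun hmem => hφ ?_⟩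
    refine Submodule.span_le.2 ?_ hmem
    rintro _ ⟨i, rfl⟩
    exact ⟨u i, rfl⟩
  have h1 : LinearIndependent ℂ (fun i => e (f 0 i)) :=
    h0.map' e.toLinearMap e.ker
  have hcont : Continuous (fun t i => e (f t i)) := by
    refine continuous_pi fun i => ?_
    refine Fin.cases ?_ (fun j => ?_) i
    · simp only [f, Fin.cons_zero]
      exact continuous_const
    · simp only [f, Fin.cons_succ, map_add, map_smul]
      exact continuous_const.add (Complex.continuous_ofReal.smul continuous_const)
  have hev : ∀ᶠ t in nhds (0:ℝ), LinearIndependent ℂ (fun i => e (f t i)) :=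
    hcont.continuousAt.eventually h1.eventually
  obtain ⟨δ, hδ, hball⟩ := Metric.eventually_nhds_iff.1 hev
  have hm : 0 < min ε δ := lt_min hε hδ
  set t := min ε δ / 2 with ht
  have ht0 : 0 < t := by positivity
  have htε : t < ε := by linarith [min_le_left ε δ]
  have htδ : t < δ := by linarith [min_le_right ε δ]
  have hli : LinearIndependent ℂ (f t) := by
    have := @hball t (by simpa [Real.dist_eq, abs_of_pos ht0] using htδ)
    exact LinearIndependent.of_comp e.toLinearMap this
  have hsub : Submodule.span ℂ (Set.range (f t)) ≤ LinearMap.range (A + (t : ℂ) • φ) := by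
    refine Submodule.span_le.2 ?_
    rintro _ ⟨i, rfl⟩
    refine Fin.cases ?_ (fun j => ?_) i
    · refine ⟨(t : ℂ)⁻¹ • v, ?_⟩
      have : (t : ℂ) ≠ 0 := by exact_mod_cast ht0.ne'
      have hv' : A v = 0 := hv
      simp only [f, Fin.cons_zero, LinearMap.add_apply, LinearMap.smul_apply, map_smul, hv',
        smul_zero, zero_add, smul_smul, inv_mul_cancel₀ this, one_smul]
    · exact ⟨u j, by simp [f]⟩
  have h2 := Submodule.finrank_mono hsub
  rw [finrank_span_eq_card hli, h t ht0 htε, Fintype.card_fin] at h2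
  omega
end

section
/- Let V and W be finite-dimensional complex vector spaces of dimensions n and m respectively, and let A : V → W be a linear map of rank r. Then the subspace {φ ∈ Hom(V,W) : φ(ker A) ⊆ range A} of Hom(V,W) has complex dimension n·m − (n−r)·(m−r). -/
/-- The space of linear maps `φ : V → W` with `φ (ker A) ⊆ range A` has complex dimension
`n * m - (n - r) * (m - r)`, where `n = dim V`, `m = dim W` and `r = rank A`. -/
theorem finrank_compatibleMaps_ker_range
    (V W : Type*) [AddCommGroup V] [Module ℂ V] [FiniteDimensional ℂ V]
    [AddCommGroup W] [Module ℂ W] [FiniteDimensional ℂ W]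
    (A : V →ₗ[ℂ] W) (n m r : ℕ)
    (hn : Module.finrank ℂ V = n) (hm : Module.finrank ℂ W = m)
    (hr : Module.finrank ℂ (LinearMap.range A) = r) :
    Module.finrank ℂ
      (Submodule.compatibleMaps (LinearMap.ker A) (LinearMap.range A)) =
      n * m - (n - r) * (m - r) := by
  let T : (V →ₗ[ℂ] W) →ₗ[ℂ] (LinearMap.ker A →ₗ[ℂ] W ⧸ LinearMap.range A) :=
    { toFun := fun φ => (LinearMap.range A).mkQ ∘ₗ φ ∘ₗ (LinearMap.ker A).subtype
      map_add' := fun x y => by ext; simp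
      map_smul' := fun c x => by ext; simp }
  have hT : ∀ φ v, T φ v = (LinearMap.range A).mkQ (φ v) := fun _ _ => rfl
  have hker : Submodule.compatibleMaps (LinearMap.ker A) (LinearMap.range A)
      = LinearMap.ker T := by
    ext φ
    rw [LinearMap.mem_ker]
    constructor
    · intro h
      ext v
      rw [hT, LinearMap.zero_apply, Submodule.mkQ_apply, Submodule.Quotient.mk_eq_zero]
      exact h v.2
    · intro h v hv
      have h1 := hT φ ⟨v, hv⟩
      rw [h, LinearMap.zero_apply] at h1
      exact (Submodule.Quotient.mk_eq_zero (LinearMap.range A)).1 h1.symm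
  have hsurj : Function.Surjective T := by
    intro ψ
    obtain ⟨s, hs⟩ := (LinearMap.range A).mkQ.exists_rightInverse_of_surjective
      (Submodule.range_mkQ _)
    obtain ⟨p, hp⟩ := (LinearMap.ker A).subtype.exists_leftInverse_of_injective
      (Submodule.ker_subtype _)
    refine ⟨s ∘ₗ ψ ∘ₗ p, ?_⟩
    apply LinearMap.ext
    intro v
    rw [hT]
    have h1 : p v = v := LinearMap.congr_fun hp v
    have h2 := LinearMap.congr_fun hs (ψ v)
    rw [LinearMap.comp_apply, LinearMap.comp_apply, h1]
    exact h2
  have h1 := T.finrank_range_add_finrank_ker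
  rw [LinearMap.range_eq_top.2 hsurj, finrank_top, Module.finrank_linearMap,
    Module.finrank_linearMap] at h1
  have h2 := A.finrank_range_add_finrank_ker
  have h3 := (LinearMap.range A).finrank_quotient_add_finrank
  rw [hker]
  have h4 : Module.finrank ℂ (LinearMap.ker A) = n - r := by omega
  have h5 : Module.finrank ℂ (W ⧸ LinearMap.range A) = m - r := by omega
  rw [h4, h5, hn, hm] at h1
  omega
end
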